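/- arXiv:2201.08464 — 2 statements merged into one kernel-verified Lean document; each statement's English description precedes it below -/
import Mathlib

section
/- Let q be a prime power and let S ⊆ ℕ^n and T ⊆ ℕ^m be nonempty finite exponent sets with all coordinates at most q−2 (the lattice point sets of integral convex polytopes P ⊆ [0,q−2]^n and Q ⊆ [0,q−2]^m). The lattice point set of the join P*Q is S' = {(s,0,0) : s ∈ S} ∪ {(0,t,1) : t ∈ T} ⊆ ℕ^{n+m+1}, so every nonzero element of 𝓛_{S'} has the form h = f + z·g with f ∈ 𝓛_S ∪ {0}, g ∈ 𝓛_T ∪ {0}, not both zero. Then N(S') = max{ (q−1)^{n+m}, N(S)(q−1)^{m+1}, N(T)(q−1)^{n+1}, (q−1)N(S)N(T) + ((q−1)^n − N(S))((q−1)^m − N(T)) }. -/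
open MvPolynomial

/-- The set of zeros of a multivariate polynomial on the torus `((F_q)ˣ)^k`. -/
def torusZeros {K : Type} [Field K] {k : ℕ} (f : MvPolynomial (Fin k) K) :
    Set (Fin k → K) :=
  {a | (∀ i, a i ≠ 0) ∧ MvPolynomial.eval a f = 0}

/-- `N(S)`: the maximum number of torus zeros of a nonzero polynomial whose
monomial support lies in `S`. -/
noncomputable def maxTorusZeros (K : Type) [Field K] {k : ℕ} (S : Set (Fin k →₀ ℕ)) : ℕ :=
  sSup {z | ∃ f : MvPolynomial (Fin k) K, f ≠ 0 ∧
    (↑f.support : Set (Fin k →₀ ℕ)) ⊆ S ∧ z = (torusZeros f).ncard}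

/-- The exponent set of the join: `S' = {(s,0,0) : s ∈ S} ∪ {(0,t,1) : t ∈ T}`. -/
noncomputable def joinExps {n m : ℕ} (S : Set (Fin n →₀ ℕ)) (T : Set (Fin m →₀ ℕ)) :
    Set (Fin (n + m + 1) →₀ ℕ) :=
  (fun s => Finsupp.mapDomain (Fin.castLE (by omega : n ≤ n + m + 1)) s) '' S ∪
    (fun t => Finsupp.mapDomain
        (fun j : Fin m => (⟨n + (j : ℕ), by have := j.isLt; omega⟩ : Fin (n + m + 1))) t
      + Finsupp.single (Fin.last (n + m)) 1) '' T

/-!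
Write an element of `𝓛_{S'}` as `h = f + z * g`. Over a torus point `(x, y)` the last coordinate `z`
is free when `f x = g y = 0`, uniquely determined when `f x ≠ 0` and `g y ≠ 0`, and impossible
otherwise. With `r = q - 1`, `A = r ^ n`, `B = r ^ m` and `a`, `b` the numbers of torus zeros of `f`
and `g`, this gives `r * a * b + (A - a) * (B - b)` zeros of `h`. The count is affine in each of `a`
and `b`, so on the box `[0, N(S)] × [0, N(T)]` it is largest at a vertex, and the two mixed vertices
are dominated by the vertex `(0, 0)`, which monomials attain. The cases `g = 0` and `f = 0`, where
`b = B` and `a = A`, contribute the remaining two terms of the maximum.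
-/

section Vertices

theorem mul_add_tsub_mul_le_max {a M A : ℕ} (c d : ℕ) (haM : a ≤ M) (hMA : M ≤ A) :
    c * a + (A - a) * d ≤ max (A * d) (c * M + (A - M) * d) := by
  rcases le_total c d with hcd | hdc
  · refine le_max_of_le_left ?_
    calc c * a + (A - a) * d ≤ d * a + (A - a) * d := by gcongr
      _ = (a + (A - a)) * d := by ring
      _ = A * d := by rw [Nat.add_sub_of_le (haM.trans hMA)]
  · refine le_max_of_le_right ?_
    calc c * a + (A - a) * d = c * a + ((M - a) + (A - M)) * d := by
          rw [show A - a = (M - a) + (A - M) by omega]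
      _ = c * a + (M - a) * d + (A - M) * d := by ring
      _ ≤ c * a + (M - a) * c + (A - M) * d := by gcongr
      _ = c * (a + (M - a)) + (A - M) * d := by ring
      _ = c * M + (A - M) * d := by rw [Nat.add_sub_of_le haM]

theorem mul_mul_add_tsub_mul_tsub_le_max {a M A b N B : ℕ} (r : ℕ) (haM : a ≤ M) (hMA : M ≤ A)
    (hbN : b ≤ N) (hNB : N ≤ B) :
    r * a * b + (A - a) * (B - b) ≤ max (A * B) (r * M * N + (A - M) * (B - N)) := by
  have affine_left : r * a * b + (A - a) * (B - b)
      ≤ max (A * (B - b)) (r * M * b + (A - M) * (B - b)) := by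
    simpa only [mul_right_comm r] using mul_add_tsub_mul_le_max (r * b) (B - b) haM hMA
  have affine_right : r * M * b + (A - M) * (B - b)
      ≤ max ((A - M) * B) (r * M * N + (A - M) * (B - N)) := by
    simpa only [mul_comm (A - M)] using mul_add_tsub_mul_le_max (r * M) (A - M) hbN hNB
  calc r * a * b + (A - a) * (B - b)
      ≤ max (A * (B - b)) (max ((A - M) * B) (r * M * N + (A - M) * (B - N))) :=
        affine_left.trans (max_le_max_left _ affine_right)
    _ ≤ max (A * B) (max (A * B) (r * M * N + (A - M) * (B - N))) := by
        gcongr <;> exact Nat.sub_le _ _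
    _ = max (A * B) (r * M * N + (A - M) * (B - N)) := by rw [← max_assoc, max_self]

end Vertices

section Fibers

variable {α β : Type*}

theorem ncard_setOf_ne_zero {M : Type*} [Zero M] [Finite α] (u : α → M) :
    {x | u x ≠ 0}.ncard = Nat.card α - {x | u x = 0}.ncard :=
  Set.ncard_compl {x | u x = 0}

variable {K : Type*} [DivisionRing K]

theorem ncard_setOf_add_mul_unit_eq_zero_of_ne_zero (u : α → K) (v : β → K) :
    {p : (α × β) × Kˣ | (u p.1.1 ≠ 0 ∧ v p.1.2 ≠ 0) ∧ u p.1.1 + v p.1.2 * p.2 = 0}.ncard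
      = {x | u x ≠ 0}.ncard * {y | v y ≠ 0}.ncard := by
  have unique_unit {a b : K} {z : Kˣ} (hb : b ≠ 0) : a + b * z = 0 ↔ (z : K) = b⁻¹ * -a := by
    rw [eq_inv_mul_iff_mul_eq₀ hb, eq_neg_iff_add_eq_zero, add_comm]
  rw [← Set.ncard_prod]
  refine Set.ncard_congr (fun p _ ↦ p.1) (fun p hp ↦ hp.1) ?_ ?_
  · rintro ⟨⟨x, y⟩, z⟩ ⟨_, z'⟩ ⟨⟨-, hy⟩, hz⟩ ⟨-, hz'⟩ rfl
    have : z = z' := Units.ext (((unique_unit hy).1 hz).trans ((unique_unit hy).1 hz').symm)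
    rw [this]
  · rintro ⟨x, y⟩ ⟨hx, hy⟩
    exact ⟨((x, y), Units.mk0 ((v y)⁻¹ * -u x) (mul_ne_zero (inv_ne_zero hy) (neg_ne_zero.2 hx))),
      ⟨⟨hx, hy⟩, (unique_unit hy).2 rfl⟩, rfl⟩

theorem ncard_setOf_add_mul_unit_eq_zero [Finite α] [Finite β] [Finite K] (u : α → K) (v : β → K) :
    {p : (α × β) × Kˣ | u p.1.1 + v p.1.2 * p.2 = 0}.ncard
      = Nat.card Kˣ * {x | u x = 0}.ncard * {y | v y = 0}.ncard
        + (Nat.card α - {x | u x = 0}.ncard) * (Nat.card β - {y | v y = 0}.ncard) := by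
  have decomposition : {p : (α × β) × Kˣ | u p.1.1 + v p.1.2 * p.2 = 0}
      = ({x | u x = 0} ×ˢ {y | v y = 0}) ×ˢ (Set.univ : Set Kˣ)
        ∪ {p | (u p.1.1 ≠ 0 ∧ v p.1.2 ≠ 0) ∧ u p.1.1 + v p.1.2 * p.2 = 0} := by
    ext ⟨⟨x, y⟩, z⟩
    by_cases hx : u x = 0 <;> by_cases hy : v y = 0 <;> simp [hx, hy]
  rw [decomposition, Set.ncard_union_eq, Set.ncard_prod, Set.ncard_prod, Set.ncard_univ,
    ncard_setOf_add_mul_unit_eq_zero_of_ne_zero, ncard_setOf_ne_zero, ncard_setOf_ne_zero,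
    mul_comm (_ * _) (Nat.card Kˣ), mul_assoc]
  exact Set.disjoint_left.2 fun p hp hp' ↦ hp'.1.1 hp.1.1

end Fibers

section RestrictSupport

variable {σ τ R : Type*} [CommSemiring R]

theorem restrictSupport_union (S T : Set (σ →₀ ℕ)) :
    restrictSupport R (S ∪ T) = restrictSupport R S ⊔ restrictSupport R T := by
  simp only [restrictSupport_eq_span, Set.image_union, Submodule.span_union]

theorem map_rename_restrictSupport (e : σ → τ) (S : Set (σ →₀ ℕ)) :
    (restrictSupport R S).map (rename e).toLinearMap
      = restrictSupport R (Finsupp.mapDomain e '' S) := by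
  simp only [restrictSupport_eq_span, Submodule.map_span, Set.image_image,
    AlgHom.toLinearMap_apply, rename_monomial]

theorem map_mulRight_monomial_restrictSupport (t : σ →₀ ℕ) (S : Set (σ →₀ ℕ)) :
    (restrictSupport R S).map (LinearMap.mulRight R (monomial t 1))
      = restrictSupport R ((· + t) '' S) := by
  simp only [restrictSupport_eq_span, Submodule.map_span, Set.image_image,
    LinearMap.mulRight_apply, monomial_mul, mul_one]

end RestrictSupport

section JoinMap

/-- The map `(f, g) ↦ f + z * g`, where `f` uses the first `n` of the `n + m + 1` variables, `g` the
next `m`, and `z` is the last one. It parametrizes the polynomials supported on a join by pairs of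
polynomials supported on its two factors. -/
noncomputable def joinMap (R : Type*) [CommSemiring R] (n m : ℕ) :
    MvPolynomial (Fin n) R × MvPolynomial (Fin m) R →ₗ[R] MvPolynomial (Fin (n + m + 1)) R :=
  (rename (Fin.castSucc ∘ Fin.castAdd m)).toLinearMap.coprod
    (LinearMap.mulRight R (X (Fin.last (n + m))) ∘ₗ
      (rename (Fin.castSucc ∘ Fin.natAdd n)).toLinearMap)

variable {n m : ℕ}

theorem joinMap_apply {R : Type*} [CommSemiring R] (f : MvPolynomial (Fin n) R)
    (g : MvPolynomial (Fin m) R) :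
    joinMap R n m (f, g) = rename (Fin.castSucc ∘ Fin.castAdd m) f
      + rename (Fin.castSucc ∘ Fin.natAdd n) g * X (Fin.last (n + m)) :=
  rfl

theorem eval_joinMap {R : Type*} [CommSemiring R] (f : MvPolynomial (Fin n) R)
    (g : MvPolynomial (Fin m) R) (a : Fin (n + m + 1) → R) :
    eval a (joinMap R n m (f, g)) = eval (fun i ↦ a (Fin.castAdd m i).castSucc) f
      + eval (fun j ↦ a (Fin.natAdd n j).castSucc) g * a (Fin.last (n + m)) := by
  simp only [joinMap_apply, map_add, map_mul, eval_rename, eval_X, Function.comp_def]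

theorem joinMap_injective (R : Type*) [CommRing R] (n m : ℕ) :
    Function.Injective (joinMap R n m) := by
  rw [injective_iff_map_eq_zero]
  rintro ⟨f, g⟩ h
  rw [joinMap_apply] at h
  have castAdd_inj : Function.Injective (Fin.castSucc ∘ (Fin.castAdd m : Fin n → Fin (n + m))) :=
    (Fin.castSucc_injective _).comp (Fin.castAdd_injective n m)
  have natAdd_inj : Function.Injective (Fin.castSucc ∘ (Fin.natAdd n : Fin m → Fin (n + m))) :=
    (Fin.castSucc_injective _).comp (Fin.natAdd_injective m n)
  have killCompl_X_last : killCompl castAdd_inj (X (R := R) (Fin.last (n + m))) = 0 := by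
    simp [killCompl, Fin.castSucc_ne_last]
  have hf : f = 0 := by
    simpa only [map_add, map_mul, map_zero, killCompl_rename_app, killCompl_X_last, mul_zero,
      add_zero] using congrArg (killCompl castAdd_inj) h
  have hg : g = 0 := by
    rw [hf, map_zero, zero_add, ← zero_mul (X _), X_mul_cancel_right_iff] at h
    exact rename_injective _ natAdd_inj (h.trans (map_zero _).symm)
  rw [hf, hg, Prod.mk_zero_zero]

theorem joinExps_eq_union (S : Set (Fin n →₀ ℕ)) (T : Set (Fin m →₀ ℕ)) :
    joinExps S T = Finsupp.mapDomain (Fin.castSucc ∘ Fin.castAdd m) '' S ∪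
      (· + Finsupp.single (Fin.last (n + m)) 1) ''
        (Finsupp.mapDomain (Fin.castSucc ∘ Fin.natAdd n) '' T) := by
  rw [Set.image_image]
  rfl

theorem map_joinMap_prod_restrictSupport (R : Type*) [CommSemiring R] (S : Set (Fin n →₀ ℕ))
    (T : Set (Fin m →₀ ℕ)) :
    ((restrictSupport R S).prod (restrictSupport R T)).map (joinMap R n m)
      = restrictSupport R (joinExps S T) := by
  rw [joinMap, LinearMap.map_coprod_prod, Submodule.map_comp, map_rename_restrictSupport,
    map_rename_restrictSupport, X, map_mulRight_monomial_restrictSupport, joinExps_eq_union,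
    restrictSupport_union]

end JoinMap

section TorusZeros

variable {K : Type} [Field K] {k n m : ℕ}

theorem ncard_torusZeros_eq_ncard_units (f : MvPolynomial (Fin k) K) :
    (torusZeros f).ncard = {u : Fin k → Kˣ | eval (fun i ↦ (u i : K)) f = 0}.ncard := by
  have torusZeros_eq_image : torusZeros f =
      (fun (u : Fin k → Kˣ) i ↦ (u i : K)) '' {u | eval (fun i ↦ (u i : K)) f = 0} := by
    ext a
    constructor
    · rintro ⟨ha, hfa⟩
      exact ⟨fun i ↦ Units.mk0 (a i) (ha i), hfa, rfl⟩
    · rintro ⟨u, hu, rfl⟩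
      exact ⟨fun i ↦ (u i).ne_zero, hu⟩
  rw [torusZeros_eq_image,
    Set.ncard_image_of_injective _ fun u v h ↦ funext fun i ↦ Units.ext (congrFun h i)]

theorem torusZeros_monomial_one (s : Fin k →₀ ℕ) : torusZeros (monomial s (1 : K)) = ∅ := by
  refine Set.eq_empty_of_forall_notMem fun a ⟨ha, h⟩ ↦ ?_
  rw [eval_monomial, one_mul] at h
  exact Finset.prod_ne_zero_iff.2 (fun i _ ↦ pow_ne_zero _ (ha i)) h

variable (K k) in
theorem ncard_torusZeros_zero :
    (torusZeros (0 : MvPolynomial (Fin k) K)).ncard = Nat.card Kˣ ^ k := by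
  simp only [ncard_torusZeros_eq_ncard_units, map_zero, Set.ofPred_true, Set.ncard_univ,
    Nat.card_fun, Nat.card_fin]

variable [Finite K]

theorem ncard_torusZeros_le_pow (f : MvPolynomial (Fin k) K) :
    (torusZeros f).ncard ≤ Nat.card Kˣ ^ k := by
  calc (torusZeros f).ncard ≤ Nat.card (Fin k → Kˣ) :=
        ncard_torusZeros_eq_ncard_units f ▸ Set.ncard_le_card _
    _ = Nat.card Kˣ ^ k := by rw [Nat.card_fun, Nat.card_fin]

theorem ncard_torusZeros_joinMap (f : MvPolynomial (Fin n) K) (g : MvPolynomial (Fin m) K) :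
    (torusZeros (joinMap K n m (f, g))).ncard
      = Nat.card Kˣ * (torusZeros f).ncard * (torusZeros g).ncard
        + (Nat.card Kˣ ^ n - (torusZeros f).ncard) * (Nat.card Kˣ ^ m - (torusZeros g).ncard) := by
  let split : (Fin (n + m + 1) → Kˣ) ≃ ((Fin n → Kˣ) × (Fin m → Kˣ)) × Kˣ :=
    (Fin.snocEquiv fun _ ↦ Kˣ).symm.trans <|
      (Equiv.prodComm _ _).trans ((Fin.appendEquiv n m).symm.prodCongr (Equiv.refl _))
  have zeros_eq_preimage :
      {u : Fin (n + m + 1) → Kˣ | eval (fun i ↦ (u i : K)) (joinMap K n m (f, g)) = 0}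
        = split ⁻¹' {p | eval (fun i ↦ (p.1.1 i : K)) f
            + eval (fun j ↦ (p.1.2 j : K)) g * p.2 = 0} := by
    ext u
    rw [Set.mem_ofPred_eq, eval_joinMap]
    rfl
  rw [ncard_torusZeros_eq_ncard_units, zeros_eq_preimage,
    Set.ncard_preimage_of_injective_subset_range
      split.injective (by simp only [split.range_eq_univ, Set.subset_univ]),
    ncard_setOf_add_mul_unit_eq_zero (fun x : Fin n → Kˣ ↦ eval (fun i ↦ (x i : K)) f)
      (fun y : Fin m → Kˣ ↦ eval (fun j ↦ (y j : K)) g),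
    Nat.card_fun, Nat.card_fun, Nat.card_fin, Nat.card_fin,
    ncard_torusZeros_eq_ncard_units f, ncard_torusZeros_eq_ncard_units g]

theorem ncard_torusZeros_joinMap_zero_right (f : MvPolynomial (Fin n) K) :
    (torusZeros (joinMap K n m (f, 0))).ncard
      = (torusZeros f).ncard * Nat.card Kˣ ^ (m + 1) := by
  rw [ncard_torusZeros_joinMap, ncard_torusZeros_zero, Nat.sub_self]
  ring

theorem ncard_torusZeros_joinMap_zero_left (g : MvPolynomial (Fin m) K) :
    (torusZeros (joinMap K n m (0, g))).ncard
      = (torusZeros g).ncard * Nat.card Kˣ ^ (n + 1) := by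
  rw [ncard_torusZeros_joinMap, ncard_torusZeros_zero, Nat.sub_self]
  ring

end TorusZeros

section MaxTorusZeros

variable {K : Type} [Field K] [Finite K] {k n m : ℕ}

theorem bddAbove_ncard_torusZeros (S : Set (Fin k →₀ ℕ)) :
    BddAbove {z | ∃ f : MvPolynomial (Fin k) K, f ≠ 0 ∧
      (↑f.support : Set (Fin k →₀ ℕ)) ⊆ S ∧ z = (torusZeros f).ncard} := by
  refine ⟨Nat.card Kˣ ^ k, ?_⟩
  rintro _ ⟨f, -, -, rfl⟩
  exact ncard_torusZeros_le_pow f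

theorem maxTorusZeros_le_iff {S : Set (Fin k →₀ ℕ)} {c : ℕ} :
    maxTorusZeros K S ≤ c ↔ ∀ f ∈ restrictSupport K S, f ≠ 0 → (torusZeros f).ncard ≤ c := by
  rw [maxTorusZeros, csSup_le_iff' (bddAbove_ncard_torusZeros S)]
  constructor
  · exact fun h f hf hf0 ↦ h _ ⟨f, hf0, hf, rfl⟩
  · rintro h _ ⟨f, hf0, hf, rfl⟩
    exact h f hf hf0

theorem ncard_torusZeros_le_maxTorusZeros {S : Set (Fin k →₀ ℕ)} {f : MvPolynomial (Fin k) K}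
    (hf : f ∈ restrictSupport K S) (hf0 : f ≠ 0) : (torusZeros f).ncard ≤ maxTorusZeros K S :=
  maxTorusZeros_le_iff.1 le_rfl f hf hf0

variable (K) in
theorem exists_ncard_torusZeros_eq_maxTorusZeros {S : Set (Fin k →₀ ℕ)} (hS : S.Nonempty) :
    ∃ f ∈ restrictSupport K S, f ≠ 0 ∧ (torusZeros f).ncard = maxTorusZeros K S := by
  obtain ⟨s, hs⟩ := hS
  have monomial_mem : monomial s (1 : K) ∈ restrictSupport K S :=
    (monomial_mem_restrictSupport K).2 (Or.inl hs)
  obtain ⟨f, hf0, hf, hmax⟩ := Nat.sSup_mem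
    (by exact ⟨_, monomial s (1 : K), monomial_eq_zero.not.2 one_ne_zero, monomial_mem, rfl⟩)
    (bddAbove_ncard_torusZeros S)
  exact ⟨f, hf, hf0, hmax.symm⟩

variable (K) in
theorem maxTorusZeros_le_pow (S : Set (Fin k →₀ ℕ)) :
    maxTorusZeros K S ≤ Nat.card Kˣ ^ k :=
  maxTorusZeros_le_iff.2 fun f _ _ ↦ ncard_torusZeros_le_pow f

theorem maxTorusZeros_joinExps_le_iff {S : Set (Fin n →₀ ℕ)} {T : Set (Fin m →₀ ℕ)} {c : ℕ} :
    maxTorusZeros K (joinExps S T) ≤ c ↔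
      ∀ f ∈ restrictSupport K S, ∀ g ∈ restrictSupport K T, (f ≠ 0 ∨ g ≠ 0) →
        (torusZeros (joinMap K n m (f, g))).ncard ≤ c := by
  have joinMap_ne_zero (f : MvPolynomial (Fin n) K) (g : MvPolynomial (Fin m) K) :
      joinMap K n m (f, g) ≠ 0 ↔ f ≠ 0 ∨ g ≠ 0 := by
    rw [map_ne_zero_iff _ (joinMap_injective K n m), Ne, Prod.mk_eq_zero, not_and_or]
  rw [maxTorusZeros_le_iff, ← map_joinMap_prod_restrictSupport]
  constructor
  · exact fun h f hf g hg hfg ↦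
      h _ (Submodule.mem_map_of_mem (Submodule.mem_prod.2 ⟨hf, hg⟩)) ((joinMap_ne_zero f g).2 hfg)
  · rintro h _ ⟨⟨f, g⟩, ⟨hf, hg⟩, rfl⟩ hfg
    exact h f hf g hg ((joinMap_ne_zero f g).1 hfg)

theorem maxTorusZeros_joinExps_le (S : Set (Fin n →₀ ℕ)) (T : Set (Fin m →₀ ℕ)) :
    maxTorusZeros K (joinExps S T)
      ≤ max (max (Nat.card Kˣ ^ (n + m)) (maxTorusZeros K S * Nat.card Kˣ ^ (m + 1)))
          (max (maxTorusZeros K T * Nat.card Kˣ ^ (n + 1))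
            (Nat.card Kˣ * maxTorusZeros K S * maxTorusZeros K T
              + (Nat.card Kˣ ^ n - maxTorusZeros K S)
                * (Nat.card Kˣ ^ m - maxTorusZeros K T))) := by
  refine maxTorusZeros_joinExps_le_iff.2 fun f hf g hg hfg ↦ ?_
  rcases eq_or_ne f 0 with rfl | hf0
  · have hg0 : g ≠ 0 := hfg.resolve_left (not_not_intro rfl)
    rw [ncard_torusZeros_joinMap_zero_left]
    refine le_max_of_le_right (le_max_of_le_left ?_)
    exact Nat.mul_le_mul_right _ (ncard_torusZeros_le_maxTorusZeros hg hg0)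
  rcases eq_or_ne g 0 with rfl | hg0
  · rw [ncard_torusZeros_joinMap_zero_right]
    refine le_max_of_le_left (le_max_of_le_right ?_)
    exact Nat.mul_le_mul_right _ (ncard_torusZeros_le_maxTorusZeros hf hf0)
  · rw [ncard_torusZeros_joinMap, pow_add]
    exact (mul_mul_add_tsub_mul_tsub_le_max _
      (ncard_torusZeros_le_maxTorusZeros hf hf0) (maxTorusZeros_le_pow K S)
      (ncard_torusZeros_le_maxTorusZeros hg hg0) (maxTorusZeros_le_pow K T)).trans
      (max_le_max (le_max_left _ _) (le_max_right _ _))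

theorem pow_le_maxTorusZeros_joinExps {S : Set (Fin n →₀ ℕ)} {T : Set (Fin m →₀ ℕ)}
    (hS : S.Nonempty) (hT : T.Nonempty) :
    Nat.card Kˣ ^ (n + m) ≤ maxTorusZeros K (joinExps S T) := by
  obtain ⟨s, hs⟩ := hS
  obtain ⟨t, ht⟩ := hT
  have := maxTorusZeros_joinExps_le_iff.1 le_rfl
    (monomial s (1 : K)) ((monomial_mem_restrictSupport K).2 (Or.inl hs))
    (monomial t (1 : K)) ((monomial_mem_restrictSupport K).2 (Or.inl ht))
    (Or.inl (monomial_eq_zero.not.2 one_ne_zero))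
  simpa only [ncard_torusZeros_joinMap, torusZeros_monomial_one, Set.ncard_empty, mul_zero,
    zero_add, Nat.sub_zero, ← pow_add] using this

end MaxTorusZeros

theorem stmt5_general (K : Type) [Field K] [Finite K] {n m : ℕ} {S : Set (Fin n →₀ ℕ)}
    {T : Set (Fin m →₀ ℕ)} (hS : S.Nonempty) (hT : T.Nonempty) :
    maxTorusZeros K (joinExps S T)
      = max (max (Nat.card Kˣ ^ (n + m)) (maxTorusZeros K S * Nat.card Kˣ ^ (m + 1)))
          (max (maxTorusZeros K T * Nat.card Kˣ ^ (n + 1))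
            (Nat.card Kˣ * maxTorusZeros K S * maxTorusZeros K T
              + (Nat.card Kˣ ^ n - maxTorusZeros K S)
                * (Nat.card Kˣ ^ m - maxTorusZeros K T))) := by
  obtain ⟨f, hf, hf0, hfmax⟩ := exists_ncard_torusZeros_eq_maxTorusZeros K hS
  obtain ⟨g, hg, hg0, hgmax⟩ := exists_ncard_torusZeros_eq_maxTorusZeros K hT
  have count_le := maxTorusZeros_joinExps_le_iff.1 (le_refl (maxTorusZeros K (joinExps S T)))
  refine le_antisymm (maxTorusZeros_joinExps_le S T) (max_le (max_le ?_ ?_) (max_le ?_ ?_))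
  · exact pow_le_maxTorusZeros_joinExps hS hT
  · rw [← hfmax, ← ncard_torusZeros_joinMap_zero_right]
    exact count_le f hf 0 (zero_mem _) (Or.inl hf0)
  · rw [← hgmax, ← ncard_torusZeros_joinMap_zero_left]
    exact count_le 0 (zero_mem _) g hg (Or.inr hg0)
  · rw [← hfmax, ← hgmax, ← ncard_torusZeros_joinMap]
    exact count_le f hf g hg (Or.inl hf0)

/-- For exponent sets `S`, `T` of polytopes `P`, `Q`, the maximal number of torus zeros
for the join satisfies
`N(S') = max{(q-1)^(n+m), N(S)(q-1)^(m+1), N(T)(q-1)^(n+1),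
  (q-1)N(S)N(T) + ((q-1)^n - N(S))((q-1)^m - N(T))}`. -/
theorem stmt5 (K : Type) [Field K] [Fintype K] (q : ℕ) (hq : Fintype.card K = q)
    (n m : ℕ) (S : Set (Fin n →₀ ℕ)) (T : Set (Fin m →₀ ℕ))
    (hSne : S.Nonempty) (hTne : T.Nonempty) (hSfin : S.Finite) (hTfin : T.Finite)
    (hSbound : ∀ s ∈ S, ∀ i, s i ≤ q - 2) (hTbound : ∀ t ∈ T, ∀ i, t i ≤ q - 2) :
    maxTorusZeros K (joinExps S T)
      = max (max ((q - 1) ^ (n + m)) (maxTorusZeros K S * (q - 1) ^ (m + 1)))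
          (max (maxTorusZeros K T * (q - 1) ^ (n + 1))
            ((q - 1) * maxTorusZeros K S * maxTorusZeros K T
              + ((q - 1) ^ n - maxTorusZeros K S) * ((q - 1) ^ m - maxTorusZeros K T))) := by
  rw [← hq, ← Nat.card_eq_fintype_card, ← Nat.card_units]
  exact stmt5_general K hSne hTne
end

section
/- Let q be a prime power and let (P_i) be a sequence of integral convex polytopes with P_i ⊆ [0,q−2]^{n_i}, whose relative minimum distances δ(P_i) converge to a limit δ. If the sequence of full Minkowski lengths (L(P_i)) is unbounded, then δ = 0. -/
open MvPolynomial Pointwise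

/-- An integral convex polytope: the convex hull of a nonempty finite set of
integer lattice points. -/
def IsIntegralPolytope {n : ℕ} (P : Set (Fin n → ℝ)) : Prop :=
  ∃ V : Finset (Fin n → ℤ), V.Nonempty ∧
    P = convexHull ℝ ((fun (v : Fin n → ℤ) (i : Fin n) => (v i : ℝ)) '' ↑V)

/-- `P ⊆ [0, q-2]^n`. -/
def InBox (q : ℕ) {n : ℕ} (P : Set (Fin n → ℝ)) : Prop :=
  ∀ x ∈ P, ∀ i, 0 ≤ x i ∧ x i ≤ (q : ℝ) - 2

/-- Lattice points of `P` regarded as exponent vectors. -/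
def latticeExps {n : ℕ} (P : Set (Fin n → ℝ)) : Set (Fin n →₀ ℕ) :=
  {d | (fun i => ((d i : ℕ) : ℝ)) ∈ P}

/-- `N(P)`: the maximal number of torus zeros of a nonzero polynomial supported
on the lattice points of `P`. -/
noncomputable def NP (K : Type) [Field K] {n : ℕ} (P : Set (Fin n → ℝ)) : ℕ :=
  maxTorusZeros K (latticeExps P)

/-- The relative minimum distance `δ(P) = ((q-1)^n - N(P))/(q-1)^n`. -/
noncomputable def deltaP (K : Type) [Field K] [Fintype K] {n : ℕ}
    (P : Set (Fin n → ℝ)) : ℝ :=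
  (((Fintype.card K : ℝ) - 1) ^ n - (NP K P : ℝ)) / ((Fintype.card K : ℝ) - 1) ^ n

/-- A lattice polytope of positive dimension: an integral convex polytope that is
not a single point. -/
def IsPosDimLatticePolytope {n : ℕ} (Q : Set (Fin n → ℝ)) : Prop :=
  IsIntegralPolytope Q ∧ ¬ Q.Subsingleton

/-- `L(P) ≥ N`: some lattice subpolytope of `P` is the Minkowski sum of at least `N`
lattice polytopes of positive dimension. -/
def HasMinkowskiLength {n : ℕ} (P : Set (Fin n → ℝ)) (N : ℕ) : Prop :=
  ∃ Q : Set (Fin n → ℝ), Q ⊆ P ∧ IsIntegralPolytope Q ∧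
    ∃ l : ℕ, N ≤ l ∧ ∃ Qs : Fin l → Set (Fin n → ℝ),
      (∀ j, IsPosDimLatticePolytope (Qs j)) ∧ Q = ∑ j, Qs j

/-!
Choose two lattice points `v j ≠ w j` in each Minkowski summand. All sums of points chosen one from
each pair are lattice points of `P`, so the Laurent polynomial `∏ j, (x ^ v j - c j x ^ w j)` is
supported on lattice points of `P`, whatever the coefficients `c j`. At a fixed point of the torus,
each factor vanishes for exactly one of the `q - 1` values of `c j`, so by averaging some choice of
`c` leaves at most a proportion `((q - 2) / (q - 1)) ^ ℓ` of the torus on which the product does not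
vanish. Hence `δ(P) ≤ ((q - 2) / (q - 1)) ^ L(P)`. Moreover `L(P)` is finite for bounded `P`, so
unboundedness of the sequence `L(P_i)` makes `L(P_i)` large for arbitrarily late `i`.
-/

open Filter Topology
open scoped Finset

section Averaging

variable {A ι U : Type*} [Fintype A] [Fintype ι] [Fintype U] [DecidableEq U]

theorem card_filter_forall_ne [DecidableEq ι] (t : ι → U) :
    #{c : ι → U | ∀ j, c j ≠ t j} = (Fintype.card U - 1) ^ Fintype.card ι := by
  have hpi : ({c | ∀ j, c j ≠ t j} : Finset (ι → U)) =
      Fintype.piFinset fun j => Finset.univ.erase (t j) := by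
    ext c
    simp
  rw [hpi, Fintype.card_piFinset]
  simp

theorem sum_card_filter_forall_ne [DecidableEq ι] (t : A → ι → U) :
    ∑ c : ι → U, #{a | ∀ j, c j ≠ t a j} =
      Fintype.card A * (Fintype.card U - 1) ^ Fintype.card ι :=
  calc ∑ c : ι → U, #{a | ∀ j, c j ≠ t a j}
    _ = ∑ a, #{c : ι → U | ∀ j, c j ≠ t a j} :=
      Finset.sum_card_bipartiteAbove_eq_sum_card_bipartiteBelow
        fun (c : ι → U) a => ∀ j, c j ≠ t a j
    _ = Fintype.card A * (Fintype.card U - 1) ^ Fintype.card ι := by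
      simp only [card_filter_forall_ne, Finset.sum_const, Finset.card_univ, smul_eq_mul]

theorem exists_card_filter_forall_ne_mul_le [Nonempty U] (t : A → ι → U) :
    ∃ c : ι → U, #{a | ∀ j, c j ≠ t a j} * Fintype.card U ^ Fintype.card ι ≤
      Fintype.card A * (Fintype.card U - 1) ^ Fintype.card ι := by
  classical
  obtain ⟨c, -, hc⟩ := Finset.exists_le_of_sum_le (s := (Finset.univ : Finset (ι → U)))
    (f := fun c => #{a | ∀ j, c j ≠ t a j} * Fintype.card U ^ Fintype.card ι)
    (g := fun _ => Fintype.card A * (Fintype.card U - 1) ^ Fintype.card ι)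
    Finset.univ_nonempty (by
      rw [← Finset.sum_mul, sum_card_filter_forall_ne, Finset.sum_const, Finset.card_univ,
        Fintype.card_fun, smul_eq_mul, mul_comm])
  exact ⟨c, hc⟩

end Averaging

section PairSums

variable {ι σ R : Type*} [Fintype ι]

theorem sum_mem_sum_pair [AddCommMonoid R] {x y u : ι → R}
    (hu : ∀ j, u j = x j ∨ u j = y j) : ∑ j, u j ∈ ∑ j, ({x j, y j} : Set R) :=
  Set.finsetSum_mem_finsetSum _ _ _ fun j _ => hu j

-- The coordinates are treated one at a time: at coordinate `i` the minimum is attained by picking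
-- from each pair the point with the smaller `i`-th coordinate.
theorem le_sum_inf_of_sum_pair_subset [AddCommMonoid R] [LinearOrder R] {v w : ι → σ → R}
    {a : σ → R} (h : ∑ j, ({v j, w j} : Set (σ → R)) ⊆ Set.Ici a) : a ≤ ∑ j, v j ⊓ w j := by
  intro i
  let u : ι → σ → R := fun j => if v j i ≤ w j i then v j else w j
  have hu : ∀ j, u j = v j ∨ u j = w j := fun j => ite_eq_or_eq _ _ _
  have hui : ∀ j, u j i = v j i ⊓ w j i := fun j => by
    rw [min_def]
    exact apply_ite (fun z : σ → R => z i) _ _ _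
  simpa only [Finset.sum_apply, Pi.inf_apply, hui] using h (sum_mem_sum_pair hu) i

theorem sum_sup_le_of_sum_pair_subset [AddCommMonoid R] [LinearOrder R] {v w : ι → σ → R}
    {b : σ → R} (h : ∑ j, ({v j, w j} : Set (σ → R)) ⊆ Set.Iic b) : ∑ j, v j ⊔ w j ≤ b :=
  le_sum_inf_of_sum_pair_subset (R := Rᵒᵈ) h

theorem one_le_sum_sup_sub_inf [Fintype σ] {x y : σ → ℤ} (h : x ≠ y) :
    1 ≤ ∑ i, ((x ⊔ y) i - (x ⊓ y) i) := by
  obtain ⟨i, hi⟩ := Function.ne_iff.1 h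
  calc 1 ≤ (x ⊔ y) i - (x ⊓ y) i := by
        rw [Pi.sup_apply, Pi.inf_apply]
        omega
    _ ≤ ∑ i, ((x ⊔ y) i - (x ⊓ y) i) :=
        Finset.single_le_sum (f := fun i => (x ⊔ y) i - (x ⊓ y) i)
          (fun i _ => sub_nonneg.2 (inf_le_sup (a := x) (b := y) i)) (Finset.mem_univ i)

theorem card_le_sum_sub_of_sum_pair_subset_Icc [Fintype σ] {v w : ι → σ → ℤ} {a b : σ → ℤ}
    (hvw : ∀ j, v j ≠ w j) (h : ∑ j, ({v j, w j} : Set (σ → ℤ)) ⊆ Set.Icc a b) :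
    (Fintype.card ι : ℤ) ≤ ∑ i, (b i - a i) := by
  have ha := le_sum_inf_of_sum_pair_subset fun z hz => (h hz).1
  have hb := sum_sup_le_of_sum_pair_subset fun z hz => (h hz).2
  calc (Fintype.card ι : ℤ) = ∑ _j : ι, 1 := by simp
    _ ≤ ∑ j, ∑ i, ((v j ⊔ w j) i - (v j ⊓ w j) i) :=
      Finset.sum_le_sum fun j _ => one_le_sum_sup_sub_inf (hvw j)
    _ = ∑ i, ((∑ j, v j ⊔ w j) i - (∑ j, v j ⊓ w j) i) := by
      rw [Finset.sum_comm]
      simp only [Finset.sum_sub_distrib, Finset.sum_apply]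
    _ ≤ ∑ i, (b i - a i) := Finset.sum_le_sum fun i _ => sub_le_sub (hb i) (ha i)

end PairSums

section LatticePoints

variable {n : ℕ} {P : Set (Fin n → ℝ)} {N : ℕ}

/-- The integer points of `P ⊆ ℝⁿ`. In contrast to `latticeExps`, negative coordinates are
allowed, as needed for the Minkowski summands of a polytope in the nonnegative orthant. -/
def latticePoints (P : Set (Fin n → ℝ)) : Set (Fin n → ℤ) :=
  {z | (fun i => (z i : ℝ)) ∈ P}

theorem sum_latticePoints_subset {ι : Type*} [Fintype ι] (Q : ι → Set (Fin n → ℝ)) :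
    ∑ j, latticePoints (Q j) ⊆ latticePoints (∑ j, Q j) := by
  intro z hz
  obtain ⟨u, hu, rfl⟩ := (Set.mem_fintype_sum _ _).1 hz
  refine (Set.mem_fintype_sum _ _).2 ⟨fun j i => (u j i : ℝ), hu, ?_⟩
  ext i
  simp

theorem latticePoints_subset_Ici_zero (hP : P ⊆ Set.Ici 0) : latticePoints P ⊆ Set.Ici 0 :=
  fun _ hz i => Int.cast_nonneg_iff.1 (hP hz i)

theorem IsPosDimLatticePolytope.nontrivial_latticePoints {Q : Set (Fin n → ℝ)}
    (hQ : IsPosDimLatticePolytope Q) : (latticePoints Q).Nontrivial := by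
  obtain ⟨⟨V, -, rfl⟩, hns⟩ := hQ
  have hV : (V : Set (Fin n → ℤ)).Nontrivial := by
    contrapose! hns with hV
    rcases (hV.image _).eq_empty_or_singleton with h | ⟨x, h⟩
    · rw [h, convexHull_empty]
      exact Set.subsingleton_empty
    · rw [h, convexHull_singleton]
      exact Set.subsingleton_singleton
  exact hV.mono fun z hz => subset_convexHull ℝ _ ⟨z, hz, rfl⟩

theorem HasMinkowskiLength.exists_sum_pair_subset (h : HasMinkowskiLength P N) :
    ∃ l, N ≤ l ∧ ∃ v w : Fin l → Fin n → ℤ,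
      (∀ j, v j ≠ w j) ∧ ∑ j, {v j, w j} ⊆ latticePoints P := by
  obtain ⟨_, hQP, -, l, hl, Q, hQ, rfl⟩ := h
  choose v hv w hw hvw using fun j => (hQ j).nontrivial_latticePoints
  refine ⟨l, hl, v, w, hvw, ?_⟩
  calc ∑ j, {v j, w j} ⊆ ∑ j, latticePoints (Q j) :=
        Set.finsetSum_subset_finsetSum _ _ _ fun j _ => Set.pair_subset (hv j) (hw j)
    _ ⊆ latticePoints (∑ j, Q j) := sum_latticePoints_subset Q
    _ ⊆ latticePoints P := fun _ hz => hQP hz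

theorem HasMinkowskiLength.anti {M : ℕ} (h : HasMinkowskiLength P N) (hMN : M ≤ N) :
    HasMinkowskiLength P M := by
  obtain ⟨Q, hQP, hQ, l, hl, hdecomp⟩ := h
  exact ⟨Q, hQP, hQ, l, hMN.trans hl, hdecomp⟩

theorem bddAbove_hasMinkowskiLength (hbelow : BddBelow P) (habove : BddAbove P) :
    BddAbove {N | HasMinkowskiLength P N} := by
  obtain ⟨a, ha⟩ := hbelow
  obtain ⟨b, hb⟩ := habove
  refine ⟨(∑ i, (⌊b i⌋ - ⌈a i⌉)).toNat, fun N hN => ?_⟩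
  obtain ⟨l, hl, v, w, hvw, hsub⟩ := hN.exists_sum_pair_subset
  have hbox : latticePoints P ⊆ Set.Icc (fun i => ⌈a i⌉) fun i => ⌊b i⌋ := fun z hz =>
    ⟨fun i => Int.ceil_le.2 (ha hz i), fun i => Int.le_floor.2 (hb hz i)⟩
  have hcard := card_le_sum_sub_of_sum_pair_subset_Icc hvw (hsub.trans hbox)
  rw [Fintype.card_fin] at hcard
  omega

theorem frequently_hasMinkowskiLength {n : ℕ → ℕ} {P : ∀ i, Set (Fin (n i) → ℝ)}
    (hfin : ∀ i, BddAbove {N | HasMinkowskiLength (P i) N})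
    (hL : ∀ N, ∃ i, HasMinkowskiLength (P i) N) (N : ℕ) :
    ∃ᶠ i in atTop, HasMinkowskiLength (P i) N := by
  refine frequently_atTop.2 fun m => ?_
  obtain ⟨B, hB⟩ := ((Set.finite_Iio m).bddAbove_biUnion).2 fun i _ => hfin i
  obtain ⟨i, hi⟩ := hL (max N (B + 1))
  refine ⟨i, ?_, hi.anti (le_max_left _ _)⟩
  by_contra! him
  have hle : max N (B + 1) ≤ B := hB (Set.mem_biUnion him hi)
  omega

end LatticePoints

section SegmentPolynomial

theorem support_prod_subset_sum_support {σ ι R : Type*} [CommSemiring R] [DecidableEq σ]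
    (s : Finset ι) (f : ι → MvPolynomial σ R) :
    (∏ j ∈ s, f j).support ⊆ ∑ j ∈ s, (f j).support := by
  classical
  induction s using Finset.induction_on with
  | empty => exact support_monomial_subset
  | insert j s hj ih =>
    rw [Finset.prod_insert hj, Finset.sum_insert hj]
    exact (support_mul _ _).trans (Finset.add_subset_add_left ih)

variable {σ ι R : Type*} [Finite σ] [Fintype ι] [CommRing R]

/-- The exponent vector of an integer vector; negative coordinates are truncated to `0`. Thus
`toExponent z` and `toExponent (-z)` are the positive and negative parts of `z`. -/
noncomputable def toExponent (z : σ → ℤ) : σ →₀ ℕ :=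
  Finsupp.equivFunOnFinite.symm fun i => (z i).toNat

theorem toExponent_apply (z : σ → ℤ) (i : σ) : toExponent z i = (z i).toNat := rfl

theorem toExponent_sub_ne {x y : σ → ℤ} (h : x ≠ y) :
    toExponent (x - y) ≠ toExponent (y - x) := by
  obtain ⟨i, hi⟩ := Function.ne_iff.1 h
  refine fun heq => hi ?_
  have hcoord := DFunLike.congr_fun heq i
  simp only [toExponent_apply, Pi.sub_apply] at hcoord
  omega

/-- The binomial `x ^ v - k x ^ w` attached to the segment `[v, w]`, divided by the common monomial
factor `x ^ (v ⊓ w)`. -/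
noncomputable def segmentBinomial (v w : σ → ℤ) (k : R) : MvPolynomial σ R :=
  monomial (toExponent (v - w)) 1 - monomial (toExponent (w - v)) k

theorem segmentBinomial_ne_zero [Nontrivial R] {v w : σ → ℤ} (h : v ≠ w) (k : R) :
    segmentBinomial v w k ≠ 0 := by
  classical
  intro h0
  have hcoeff := congrArg (coeff (toExponent (v - w))) h0
  simp [segmentBinomial, coeff_monomial, (toExponent_sub_ne h).symm] at hcoeff

theorem inf_add_mem_pair_of_mem_support_segmentBinomial {v w : σ → ℤ} {k : R} {d : σ →₀ ℕ}
    (hd : d ∈ (segmentBinomial v w k).support) :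
    v ⊓ w + (fun i => (d i : ℤ)) ∈ ({v, w} : Set (σ → ℤ)) := by
  classical
  refine (Finset.mem_union.1 (support_sub σ _ _ hd)).imp (fun h => ?_) fun h => ?_ <;>
  · obtain rfl := Finset.mem_singleton.1 (support_monomial_subset h)
    ext i
    simp only [Pi.add_apply, Pi.inf_apply, toExponent_apply, Pi.sub_apply]
    omega

/-- The Laurent polynomial `∏ j, (x ^ v j - c j x ^ w j)`, supported on the sums of endpoints of
the segments `[v j, w j]`. The encoding as a polynomial, with the common monomial factor
`x ^ ∑ j, v j ⊓ w j` taken out, is faithful only when `0 ≤ ∑ j, v j ⊓ w j`, since `toExponent`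
truncates. -/
noncomputable def segmentPolynomial (v w : ι → σ → ℤ) (c : ι → R) : MvPolynomial σ R :=
  monomial (toExponent (∑ j, v j ⊓ w j)) 1 * ∏ j, segmentBinomial (v j) (w j) (c j)

theorem segmentPolynomial_ne_zero [IsDomain R] {v w : ι → σ → ℤ} (h : ∀ j, v j ≠ w j) (c : ι → R) :
    segmentPolynomial v w c ≠ 0 :=
  mul_ne_zero (monomial_eq_zero.not.2 one_ne_zero) <|
    Finset.prod_ne_zero_iff.2 fun j _ => segmentBinomial_ne_zero (h j) (c j)

theorem mem_sum_pair_of_mem_support_segmentPolynomial {v w : ι → σ → ℤ} {c : ι → R}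
    (h : 0 ≤ ∑ j, v j ⊓ w j) {d : σ →₀ ℕ} (hd : d ∈ (segmentPolynomial v w c).support) :
    (fun i => (d i : ℤ)) ∈ ∑ j, ({v j, w j} : Set (σ → ℤ)) := by
  classical
  obtain ⟨m, hm, e, he, rfl⟩ := Finset.mem_add.1 (support_mul _ _ hd)
  obtain rfl := Finset.mem_singleton.1 (support_monomial_subset hm)
  have he' := Finset.coe_subset.2 (support_prod_subset_sum_support _ _) he
  rw [Finset.coe_sum, Set.mem_fintype_sum] at he'
  obtain ⟨g, hg, rfl⟩ := he'
  refine (Set.mem_fintype_sum _ _).2 ⟨fun j => v j ⊓ w j + fun i => (g j i : ℤ),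
    fun j => inf_add_mem_pair_of_mem_support_segmentBinomial (hg j), ?_⟩
  ext i
  have hi : 0 ≤ (∑ j, v j ⊓ w j) i := h i
  rw [Finsupp.add_apply, toExponent_apply, Nat.cast_add, Int.toNat_of_nonneg hi,
    Finset.sum_add_distrib, Pi.add_apply]
  simp only [Finsupp.finsetSum_apply, Finset.sum_apply, Nat.cast_sum]

end SegmentPolynomial

section TorusEvaluation

variable {σ ι R : Type*} [Fintype σ] [Fintype ι] [CommRing R]

/-- The Laurent monomial `x ^ z` as a function on the torus `(Rˣ) ^ σ`. -/
def torusMonomial (z : σ → ℤ) (a : σ → Rˣ) : Rˣ :=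
  ∏ i, a i ^ z i

theorem eval_monomial_toExponent (a : σ → Rˣ) (z : σ → ℤ) (k : R) :
    eval (fun i => (a i : R)) (monomial (toExponent z) k) =
      k * (∏ i, a i ^ (z i).toNat : Rˣ) := by
  rw [eval_monomial, Finsupp.prod_fintype _ _ fun i => pow_zero _]
  simp [toExponent_apply]

theorem torusMonomial_mul_prod_pow_toNat (x y : σ → ℤ) (a : σ → Rˣ) :
    torusMonomial (x - y) a * ∏ i, a i ^ ((y - x) i).toNat = ∏ i, a i ^ ((x - y) i).toNat := by
  rw [torusMonomial, ← Finset.prod_mul_distrib]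
  refine Finset.prod_congr rfl fun i _ => ?_
  rw [← zpow_natCast, ← zpow_natCast, ← zpow_add]
  congr 1
  simp only [Pi.sub_apply]
  omega

theorem eval_segmentBinomial_torusMonomial (v w : σ → ℤ) (a : σ → Rˣ) :
    eval (fun i => (a i : R)) (segmentBinomial v w (torusMonomial (v - w) a : R)) = 0 := by
  rw [segmentBinomial, map_sub, eval_monomial_toExponent, eval_monomial_toExponent, one_mul,
    ← Units.val_mul, torusMonomial_mul_prod_pow_toNat, sub_self]

theorem eval_segmentPolynomial_eq_zero {v w : ι → σ → ℤ} {c : ι → R} {a : σ → Rˣ} {j : ι}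
    (h : c j = torusMonomial (v j - w j) a) :
    eval (fun i => (a i : R)) (segmentPolynomial v w c) = 0 := by
  rw [segmentPolynomial, map_mul, map_prod]
  refine mul_eq_zero_of_right _ (Finset.prod_eq_zero (Finset.mem_univ j) ?_)
  rw [h, eval_segmentBinomial_torusMonomial]

theorem exists_card_eval_segmentPolynomial_ne_zero_mul_le [Fintype Rˣ] [DecidableEq R]
    [DecidableEq σ] (v w : ι → σ → ℤ) :
    ∃ c : ι → R, #{a : σ → Rˣ | eval (fun i => (a i : R)) (segmentPolynomial v w c) ≠ 0} *
        Fintype.card Rˣ ^ Fintype.card ι ≤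
      Fintype.card Rˣ ^ Fintype.card σ * (Fintype.card Rˣ - 1) ^ Fintype.card ι := by
  obtain ⟨c, hc⟩ := exists_card_filter_forall_ne_mul_le
    fun (a : σ → Rˣ) j => torusMonomial (v j - w j) a
  rw [Fintype.card_fun] at hc
  refine ⟨fun j => c j, le_trans (Nat.mul_le_mul_right _ (Finset.card_le_card ?_)) hc⟩
  refine Finset.monotone_filter_right _ fun a _ ha j hj => ha ?_
  exact eval_segmentPolynomial_eq_zero (congrArg Units.val hj)

end TorusEvaluation

section BinomialNonzeroRatio

variable (K : Type*) [Fintype K]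

/-- The proportion `(q - 2) / (q - 1)` of coefficients `k ≠ 0` for which the binomial
`x ^ v - k x ^ w` over a field with `q` elements does not vanish at a given point of the torus.
Since `q ≥ 2`, the truncated subtractions are exact. -/
noncomputable def binomialNonzeroRatio : ℝ :=
  ((Fintype.card K - 2 : ℕ) : ℝ) / (Fintype.card K - 1 : ℕ)

theorem binomialNonzeroRatio_nonneg : 0 ≤ binomialNonzeroRatio K := by
  rw [binomialNonzeroRatio]
  positivity

theorem binomialNonzeroRatio_lt_one [Nontrivial K] : binomialNonzeroRatio K < 1 := by
  have hcard : 1 < Fintype.card K := Fintype.one_lt_card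
  rw [binomialNonzeroRatio, div_lt_one (by exact_mod_cast Nat.sub_pos_of_lt hcard), Nat.cast_lt]
  omega

end BinomialNonzeroRatio

section MinimumDistance

variable {K : Type} [Field K] {n : ℕ}

theorem ncard_torusZeros_le_NP [Finite K] {P : Set (Fin n → ℝ)} {f : MvPolynomial (Fin n) K}
    (hf : f ≠ 0) (hsupp : (f.support : Set (Fin n →₀ ℕ)) ⊆ latticeExps P) :
    (torusZeros f).ncard ≤ NP K P := by
  refine le_csSup ⟨Nat.card (Fin n → K), ?_⟩ ⟨f, hf, hsupp, rfl⟩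
  rintro _ ⟨g, -, -, rfl⟩
  exact Set.ncard_le_card _

variable [Fintype K]

theorem ncard_torusZeros [DecidableEq K] (f : MvPolynomial (Fin n) K) :
    (torusZeros f).ncard = #{a : Fin n → Kˣ | eval (fun i => (a i : K)) f = 0} := by
  have hinj : Function.Injective fun (a : Fin n → Kˣ) (i : Fin n) => (a i : K) :=
    fun a b h => funext fun i => Units.ext (congrFun h i)
  rw [← Set.ncard_coe_finset, ← Set.ncard_image_of_injective _ hinj]
  congr 1
  ext a
  simp only [torusZeros, Set.mem_ofPred_eq, Set.mem_image, Finset.coe_filter, Finset.mem_univ,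
    true_and]
  constructor
  · rintro ⟨hne, hzero⟩
    exact ⟨fun i => Units.mk0 (a i) (hne i), hzero, rfl⟩
  · rintro ⟨b, hb, rfl⟩
    exact ⟨fun i => (b i).ne_zero, hb⟩

theorem ncard_torusZeros_add_card_eval_ne_zero [DecidableEq K] (f : MvPolynomial (Fin n) K) :
    (torusZeros f).ncard + #{a : Fin n → Kˣ | eval (fun i => (a i : K)) f ≠ 0} =
      (Fintype.card K - 1) ^ n := by
  rw [ncard_torusZeros, Finset.card_filter_add_card_filter_not, Finset.card_univ,
    Fintype.card_fun, Fintype.card_fin, Fintype.card_units]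

theorem ncard_torusZeros_le (f : MvPolynomial (Fin n) K) :
    (torusZeros f).ncard ≤ (Fintype.card K - 1) ^ n := by
  classical
  exact (Nat.le_add_right _ _).trans_eq (ncard_torusZeros_add_card_eval_ne_zero f)

theorem NP_le (P : Set (Fin n → ℝ)) : NP K P ≤ (Fintype.card K - 1) ^ n := by
  refine csSup_le' ?_
  rintro _ ⟨f, -, -, rfl⟩
  exact ncard_torusZeros_le f

theorem deltaP_eq (P : Set (Fin n → ℝ)) :
    deltaP K P = (((Fintype.card K - 1) ^ n - NP K P : ℕ) : ℝ) /
      ((Fintype.card K - 1) ^ n : ℕ) := by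
  rw [deltaP, Nat.cast_sub (NP_le P), Nat.cast_pow, Nat.cast_sub Fintype.card_pos, Nat.cast_one]

theorem deltaP_nonneg (P : Set (Fin n → ℝ)) : 0 ≤ deltaP K P := by
  rw [deltaP_eq]
  positivity

theorem deltaP_le_card_eval_ne_zero_div [DecidableEq K] {P : Set (Fin n → ℝ)}
    {f : MvPolynomial (Fin n) K} (hf : f ≠ 0)
    (hsupp : (f.support : Set (Fin n →₀ ℕ)) ⊆ latticeExps P) :
    deltaP K P ≤
      (#{a : Fin n → Kˣ | eval (fun i => (a i : K)) f ≠ 0} : ℝ) /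
        ((Fintype.card K - 1) ^ n : ℕ) := by
  rw [deltaP_eq]
  gcongr
  rw [Nat.sub_le_iff_le_add', ← ncard_torusZeros_add_card_eval_ne_zero f]
  exact Nat.add_le_add_right (ncard_torusZeros_le_NP hf hsupp) _

theorem deltaP_le_pow_of_sum_pair_subset {P : Set (Fin n → ℝ)} (hP : P ⊆ Set.Ici 0)
    {ι : Type*} [Fintype ι] {v w : ι → Fin n → ℤ} (hvw : ∀ j, v j ≠ w j)
    (hsub : ∑ j, {v j, w j} ⊆ latticePoints P) :
    deltaP K P ≤ binomialNonzeroRatio K ^ Fintype.card ι := by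
  classical
  obtain ⟨c, hc⟩ := exists_card_eval_segmentPolynomial_ne_zero_mul_le (R := K) v w
  rw [Fintype.card_fin, Fintype.card_units, Nat.sub_sub] at hc
  have hnonneg : 0 ≤ ∑ j, v j ⊓ w j :=
    le_sum_inf_of_sum_pair_subset (hsub.trans (latticePoints_subset_Ici_zero hP))
  have hsupp : ((segmentPolynomial v w c).support : Set (Fin n →₀ ℕ)) ⊆ latticeExps P :=
    fun d hd => by
      simpa only [latticePoints, latticeExps, Set.mem_ofPred_eq, Int.cast_natCast] using
        hsub (mem_sum_pair_of_mem_support_segmentPolynomial hnonneg hd)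
  refine (deltaP_le_card_eval_ne_zero_div (segmentPolynomial_ne_zero hvw c) hsupp).trans ?_
  have hpos : 0 < Fintype.card K - 1 := Nat.sub_pos_of_lt Fintype.one_lt_card
  rw [binomialNonzeroRatio, div_pow, div_le_div_iff₀ (mod_cast pow_pos hpos n)
    (pow_pos (mod_cast hpos) _), mul_comm (((Fintype.card K - 2 : ℕ) : ℝ) ^ _)]
  exact_mod_cast hc

theorem HasMinkowskiLength.deltaP_le_pow {P : Set (Fin n → ℝ)} {N : ℕ}
    (h : HasMinkowskiLength P N) (hP : P ⊆ Set.Ici 0) :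
    deltaP K P ≤ binomialNonzeroRatio K ^ N := by
  obtain ⟨l, hl, v, w, hvw, hsub⟩ := h.exists_sum_pair_subset
  calc deltaP K P ≤ binomialNonzeroRatio K ^ l := by
        simpa only [Fintype.card_fin] using deltaP_le_pow_of_sum_pair_subset hP hvw hsub
    _ ≤ binomialNonzeroRatio K ^ N :=
        pow_le_pow_of_le_one (binomialNonzeroRatio_nonneg K)
          (binomialNonzeroRatio_lt_one K).le hl

end MinimumDistance

theorem InBox.subset_Ici_zero {q n : ℕ} {P : Set (Fin n → ℝ)} (h : InBox q P) : P ⊆ Set.Ici 0 :=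
  fun x hx i => (h x hx i).1

theorem InBox.bddAbove {q n : ℕ} {P : Set (Fin n → ℝ)} (h : InBox q P) : BddAbove P :=
  ⟨fun _ => (q : ℝ) - 2, fun x hx i => (h x hx i).2⟩

theorem stmt17_general (K : Type) [Field K] [Fintype K] (n : ℕ → ℕ)
    (P : ∀ i, Set (Fin (n i) → ℝ)) (hnonneg : ∀ i, P i ⊆ Set.Ici 0)
    (hbdd : ∀ i, BddAbove (P i)) (hL : ∀ N, ∃ i, HasMinkowskiLength (P i) N) :
    MapClusterPt 0 atTop fun i => deltaP K (P i) := by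
  refine (nhds_basis_Ioo_pos (0 : ℝ)).mapClusterPt_iff_frequently.2 fun ε hε => ?_
  obtain ⟨N, hN⟩ := exists_pow_lt_of_lt_one hε (binomialNonzeroRatio_lt_one K)
  have hfin : ∀ i, BddAbove {N | HasMinkowskiLength (P i) N} := fun i =>
    bddAbove_hasMinkowskiLength ⟨0, hnonneg i⟩ (hbdd i)
  refine (frequently_hasMinkowskiLength hfin hL N).mono fun i hi => ⟨?_, ?_⟩
  · linarith [deltaP_nonneg (K := K) (P i)]
  · rw [zero_add]
    exact (hi.deltaP_le_pow (hnonneg i)).trans_lt hN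

/-- If the full Minkowski lengths `L(P_i)` of an infinite family are unbounded, then
the limit of the relative minimum distances is `0`. -/
theorem stmt17 (K : Type) [Field K] [Fintype K] (q : ℕ) (hq : Fintype.card K = q)
    (n : ℕ → ℕ) (P : ∀ i, Set (Fin (n i) → ℝ))
    (hpoly : ∀ i, IsIntegralPolytope (P i)) (hbox : ∀ i, InBox q (P i))
    (hL : ∀ N, ∃ i, HasMinkowskiLength (P i) N)
    (δ : ℝ)
    (hδ : Filter.Tendsto (fun i => deltaP K (P i)) Filter.atTop (nhds δ)) :
    δ = 0 := by
  have hcluster := stmt17_general K n P (fun i => (hbox i).subset_Ici_zero)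
    (fun i => (hbox i).bddAbove) hL
  exact (eq_of_nhds_neBot (ClusterPt.mono hcluster hδ)).symm
end
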